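/- Let G1 be a k1-regular finite simple graph on n1 vertices (not necessarily connected) with k1 odd, and let G2 be a finite simple graph (not necessarily connected) whose maximum degree is at most k2 and whose minimum degree is at least 1. If (k1² − k1)/2 ≥ k2, then the Cartesian product G1 × G2 is antimagic. -/

import Mathlib

/-- The vertex sum at `v` under an edge labeling `f`: the sum of the labels of all
edges incident with `v`. -/
noncomputable def vertexSum {V : Type*} [Finite V] (G : SimpleGraph V)
    (f : Sym2 V → ℕ) (v : V) : ℕ :=
  ∑ e ∈ (G.incidenceSet v).toFinite.toFinset, f e

/-- A graph is antimagic if there is a bijection from its edge set to `{1, ..., m}`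
(`m` = number of edges) such that all vertex sums are pairwise distinct. -/
def IsAntimagic {V : Type*} [Finite V] (G : SimpleGraph V) : Prop :=
  ∃ f : Sym2 V → ℕ,
    Set.BijOn f G.edgeSet (Set.Icc 1 (Nat.card G.edgeSet)) ∧
    ∀ u v : V, u ≠ v → vertexSum G f u ≠ vertexSum G f v

/-!
In `G₁` every degree is odd, so a decomposition of the edges into as few walks as possible has each
vertex as an end exactly once: two walks with a common end could be merged. Label the edges
`1, m, 2, m - 1, …` along these walks, where `m` is the number of edges. Each passage of a walk
through a vertex then contributes `m + 1` or `m + 2` to its vertex sum, and only the edge at which a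
walk ends is left unpaired, so two vertex sums of `G₁` differ by little more than `m`.

In `G₁ □ G₂` the copies of `G₁` carry this labeling, shifted by successive multiples of `m`, and the
copies of each edge of `G₂` carry consecutive larger labels. The latter increase with the vertex
sums of `G₁`, which separates the vertices within a copy of `G₁`. The copies of `G₁` are ordered by
the contribution of `G₂` to their vertex sums, and passing from one to a later one adds at least
`k₁ * m` to a vertex sum. By the degree condition this exceeds all variation within a copy.
-/

open SimpleGraph

/-- A finite family of walks of `G`, each bundled with its two ends. It models a decomposition of
the edges of `G` into trails. -/
abbrev WalkFamily {V : Type*} (G : SimpleGraph V) :=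
  List (Σ u w : V, G.Walk u w)

namespace WalkFamily

section Basic

variable {V : Type*} {G : SimpleGraph V}

/-- The edges of the walks of `L`, in order of traversal, one walk after the other. -/
def edges (L : WalkFamily G) : List (Sym2 V) :=
  L.flatMap fun p => p.2.2.edges

/-- The ends of the walks of `L`. A closed walk contributes its base point twice. -/
def ends (L : WalkFamily G) : List V :=
  L.flatMap fun p => [p.1, p.2.1]

theorem edges_cons (p : Σ u w : V, G.Walk u w) (L : WalkFamily G) :
    edges (p :: L) = p.2.2.edges ++ edges L :=
  List.flatMap_cons

theorem ends_cons (p : Σ u w : V, G.Walk u w) (L : WalkFamily G) :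
    ends (p :: L) = p.1 :: p.2.1 :: ends L :=
  List.flatMap_cons

theorem exists_edges_eq (l : List (Sym2 V)) (hl : ∀ e ∈ l, e ∈ G.edgeSet) :
    ∃ L : WalkFamily G, L.edges = l := by
  induction l with
  | nil => exact ⟨[], rfl⟩
  | cons e l ih =>
    obtain ⟨L, rfl⟩ := ih fun f hf => hl f (List.mem_cons_of_mem e hf)
    induction e with | _ u w =>
    have huw : G.Adj u w := hl _ List.mem_cons_self
    exact ⟨⟨u, w, huw.toWalk⟩ :: L, rfl⟩

theorem exists_walk_to_end (p : Σ u w : V, G.Walk u w) {v : V} (hv : v ∈ [p.1, p.2.1]) :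
    ∃ (u : V) (q : G.Walk u v), q.edges.Perm p.2.2.edges := by
  obtain ⟨u, w, p⟩ := p
  rcases List.mem_pair.1 hv with rfl | rfl
  · exact ⟨w, p.reverse, by rw [Walk.edges_reverse]; exact List.reverse_perm _⟩
  · exact ⟨u, p, .rfl⟩

theorem exists_edges_perm_append (p q : Σ u w : V, G.Walk u w) {v : V}
    (hp : v ∈ [p.1, p.2.1]) (hq : v ∈ [q.1, q.2.1]) :
    ∃ r : Σ u w : V, G.Walk u w, r.2.2.edges.Perm (p.2.2.edges ++ q.2.2.edges) := by
  obtain ⟨x, p', hp'⟩ := exists_walk_to_end p hp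
  obtain ⟨y, q', hq'⟩ := exists_walk_to_end q hq
  refine ⟨⟨x, y, p'.append q'.reverse⟩, ?_⟩
  rw [Walk.edges_append, Walk.edges_reverse]
  exact hp'.append ((List.reverse_perm _).trans hq')

end Basic

section DecidableEq

variable {V : Type*} [DecidableEq V] {G : SimpleGraph V}

theorem exists_length_lt_of_two_lt_count_ends (L : WalkFamily G) {v : V}
    (hv : 2 < L.ends.count v) :
    ∃ L' : WalkFamily G, L'.length < L.length ∧ L'.edges.Perm L.edges := by
  classical
  obtain ⟨p, hpL, hp⟩ := List.mem_flatMap.1 (List.count_pos_iff.1 (by lia : 0 < L.ends.count v))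
  have hL : L.Perm (p :: L.erase p) := List.perm_cons_erase hpL
  set M : WalkFamily G := L.erase p
  have hM : 0 < M.ends.count v := by
    have hcount : L.ends.count v = (p.1 :: p.2.1 :: M.ends).count v :=
      (hL.flatMap_right _).count_eq v
    grind
  obtain ⟨q, hqM, hq⟩ := List.mem_flatMap.1 (List.count_pos_iff.1 hM)
  have hM' : M.Perm (q :: M.erase q) := List.perm_cons_erase hqM
  obtain ⟨r, hr⟩ := exists_edges_perm_append p q hp hq
  refine ⟨r :: M.erase q, ?_, ?_⟩
  · simp [hL.length_eq, hM'.length_eq]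
  · have hedges : L.edges.Perm (p.2.2.edges ++ (q.2.2.edges ++ edges (M.erase q))) :=
      (hL.flatMap_right _).trans ((hM'.flatMap_right _).append_left _)
    rw [edges_cons]
    exact (hr.append_right _).trans (List.append_assoc .. ▸ hedges.symm)

theorem exists_count_ends_le_two (L : WalkFamily G) :
    ∃ L' : WalkFamily G, L'.edges.Perm L.edges ∧ ∀ v, L'.ends.count v ≤ 2 := by
  by_cases hL : ∀ v, L.ends.count v ≤ 2
  · exact ⟨L, .rfl, hL⟩
  · push Not at hL
    obtain ⟨v, hv⟩ := hL
    obtain ⟨M, _, hM⟩ := exists_length_lt_of_two_lt_count_ends L hv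
    obtain ⟨L', hL', hends⟩ := exists_count_ends_le_two M
    exact ⟨L', hL'.trans hM, hends⟩
termination_by L.length

theorem even_countP_edges_add_count_ends (L : WalkFamily G) (hL : L.edges.Nodup) (v : V) :
    Even (L.edges.countP (v ∈ ·) + L.ends.count v) := by
  induction L with
  | nil => exact Even.zero
  | cons p L ih =>
    obtain ⟨u, w, p⟩ := p
    rw [edges_cons, List.nodup_append] at hL
    have hp := (Walk.isTrail_def p).2 hL.1 |>.even_countP_edges_iff v
    specialize ih hL.2.1
    rw [edges_cons, ends_cons, List.countP_append, List.count_cons, List.count_cons]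
    grind

theorem exists_count_ends_eq_one [Fintype V] [DecidableRel G.Adj]
    (hodd : ∀ v, Odd (G.degree v)) :
    ∃ L : WalkFamily G, L.edges.Perm G.edgeFinset.toList ∧ ∀ v, L.ends.count v = 1 := by
  obtain ⟨L₀, hL₀⟩ := exists_edges_eq (G := G) G.edgeFinset.toList (by simp)
  obtain ⟨L, hL, hends⟩ := exists_count_ends_le_two L₀
  rw [hL₀] at hL
  refine ⟨L, hL, fun v => ?_⟩
  have hdeg : L.edges.countP (v ∈ ·) = G.degree v := by
    rw [hL.countP_eq, ← card_incidenceFinset_eq_degree, incidenceFinset_eq_filter,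
      ← Multiset.coe_countP, Finset.coe_toList, Multiset.countP_eq_card_filter]
    rfl
  have heven := even_countP_edges_add_count_ends L
    (hL.nodup_iff.2 (Finset.nodup_toList _)) v
  grind

end DecidableEq

section Sum

variable {V R : Type*} [DecidableEq V] {G : SimpleGraph V}
  [AddCommMonoid R] [PartialOrder R] [IsOrderedAddMonoid R]

-- `a` stands for the value of the edge before the walk, or for `C` if there is none.
theorem sum_incident_walk_nonneg (g : Sym2 V → R) {C : R} (v : V) {u w : V} (p : G.Walk u w)
    (hC : ∀ e ∈ p.edges, 0 ≤ g e + C) (a : R) (ha : 0 ≤ a + C)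
    (hp : (a :: p.edges.map g).IsChain fun a b => 0 ≤ a + b) :
    0 ≤ (if v = u then a else 0) + ((if v = w then C else 0) +
      ((p.edges.filter (v ∈ ·)).map g).sum) := by
  induction p generalizing a with
  | @nil u => by_cases hu : v = u <;> simp [hu, ha]
  | @cons u x w h p ih =>
    rw [Walk.edges_cons, List.map_cons, List.isChain_cons_cons] at hp
    have hrest := ih (fun e he => hC e (List.mem_cons_of_mem _ he)) _
      (hC _ List.mem_cons_self) hp.2
    have hne := h.ne
    by_cases hu : v = u
    · subst hu
      simpa [hne, add_left_comm, add_assoc] using add_nonneg hp.1 hrest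
    · by_cases hx : v = x
      · subst hx
        simpa [hu, add_left_comm] using hrest
      · simpa [hu, hx] using hrest

theorem count_ends_smul_add_sum_nonneg (L : WalkFamily G) (g : Sym2 V → R) {C : R} (h0 : 0 ≤ C)
    (hC : ∀ e ∈ L.edges, 0 ≤ g e + C)
    (hL : (L.edges.map g).IsChain fun a b => 0 ≤ a + b) (v : V) :
    0 ≤ L.ends.count v • C + ((L.edges.filter (v ∈ ·)).map g).sum := by
  induction L with
  | nil => simp [ends, edges]
  | cons p L ih =>
    obtain ⟨u, w, p⟩ := p
    rw [edges_cons] at hC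
    rw [edges_cons, List.map_append, List.isChain_append] at hL
    have hCp : ∀ e ∈ p.edges, 0 ≤ g e + C := fun e he => hC e (List.mem_append_left _ he)
    have hchain : (C :: p.edges.map g).IsChain fun a b => 0 ≤ a + b := by
      refine hL.1.cons fun a ha => ?_
      obtain ⟨e, he, rfl⟩ := List.mem_map.1 (List.mem_of_mem_head? ha)
      exact add_comm C (g e) ▸ hCp e he
    have hp := sum_incident_walk_nonneg g v p hCp C (add_nonneg h0 h0) hchain
    have hrest := ih (fun e he => hC e (List.mem_append_right _ he)) hL.2.1
    have hcount : (ends (⟨u, w, p⟩ :: L)).count v • C =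
        (if v = u then C else 0) + (if v = w then C else 0) + (ends L).count v • C := by
      simp only [ends_cons, List.count_cons, beq_iff_eq, add_smul, ite_smul, one_smul, zero_smul,
        eq_comm (b := v)]
      abel
    rw [hcount, edges_cons, List.filter_append, List.map_append, List.sum_append]
    convert add_nonneg hp hrest using 1
    abel

theorem count_ends_smul_add_sum_incidenceFinset_nonneg [Fintype V] [DecidableRel G.Adj]
    (L : WalkFamily G) (hL : L.edges.Perm G.edgeFinset.toList) (g : Sym2 V → R) {C : R}
    (h0 : 0 ≤ C) (hC : ∀ e ∈ L.edges, 0 ≤ g e + C)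
    (hchain : (L.edges.map g).IsChain fun a b => 0 ≤ a + b) (v : V) :
    0 ≤ L.ends.count v • C + ∑ e ∈ G.incidenceFinset v, g e := by
  have hsum : ((L.edges.filter (v ∈ ·)).map g).sum = ∑ e ∈ G.incidenceFinset v, g e := by
    rw [((hL.filter _).map g).sum_eq, ← List.sum_toFinset _ ((Finset.nodup_toList _).filter _),
      List.toFinset_filter, Finset.toList_toFinset, incidenceFinset_eq_filter]
    simp only [decide_eq_true_eq]
  exact hsum ▸ L.count_ends_smul_add_sum_nonneg g h0 hC hchain v

end Sum

end WalkFamily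

section VertexSum

variable {V : Type*} [Fintype V] (G : SimpleGraph V) [DecidableRel G.Adj]

theorem vertexSum_eq_sum_incidenceFinset [DecidableEq V] (f : Sym2 V → ℕ) (v : V) :
    vertexSum G f v = ∑ e ∈ G.incidenceFinset v, f e :=
  Finset.sum_congr (by ext; simp) fun _ _ => rfl

theorem vertexSum_eq_sum_neighborFinset (f : Sym2 V → ℕ) (v : V) :
    vertexSum G f v = ∑ w ∈ G.neighborFinset v, f s(v, w) := by
  classical
  have himage : G.incidenceFinset v = (G.neighborFinset v).image (s(v, ·)) := by
    ext e
    rw [mem_incidenceFinset, Finset.mem_image]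
    constructor
    · rintro ⟨he, w, rfl⟩
      exact ⟨w, (G.mem_neighborFinset v w).2 he, rfl⟩
    · rintro ⟨w, hw, rfl⟩
      exact G.mem_incidence_iff_neighbor.2 ((G.mem_neighborFinset v w).1 hw)
  rw [vertexSum_eq_sum_incidenceFinset, himage, Finset.sum_image]
  exact fun _ _ _ _ h => Sym2.congr_right.1 h

theorem vertexSum_add_const (f : Sym2 V → ℕ) (c : ℕ) (v : V) :
    vertexSum G (fun e => f e + c) v = vertexSum G f v + G.degree v * c := by
  classical
  simp [vertexSum_eq_sum_incidenceFinset, Finset.sum_add_distrib]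

end VertexSum

theorem isAntimagic_of_bijOn {V : Type*} [Finite V] {G : SimpleGraph V} {f : Sym2 V → ℕ} {m : ℕ}
    (hf : Set.BijOn f G.edgeSet (Set.Icc 1 m)) (hinj : (vertexSum G f).Injective) :
    IsAntimagic G := by
  have hcard : Nat.card G.edgeSet = m := by
    rw [Nat.card_congr hf.equiv, Nat.card_eq_fintype_card, Fintype.card_ofFinset, Nat.card_Icc,
      Nat.add_sub_cancel]
  exact ⟨f, hcard ▸ hf, fun _ _ => hinj.ne⟩

theorem bijOn_idxOf {α : Type*} [DecidableEq α] {l : List α} (hl : l.Nodup) :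
    Set.BijOn l.idxOf {a | a ∈ l} (Set.Iio l.length) := by
  refine ⟨fun _ => List.idxOf_lt_length_of_mem, fun _ ha _ _ => (List.idxOf_inj ha).1,
    fun i hi => ⟨l[i]'hi, List.getElem_mem _, hl.idxOf_getElem i hi⟩⟩

theorem map_idxOf_self {α : Type*} [DecidableEq α] {l : List α} (hl : l.Nodup) :
    l.map l.idxOf = List.range l.length :=
  List.ext_getElem (by simp) fun i _ _ => by simp [hl.idxOf_getElem]

/-- The sequence `1, m, 2, m - 1, …`, which enumerates `{1, …, m}` at the indices `0, …, m - 1`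
in such a way that consecutive terms add up to `m + 1` or `m + 2`. -/
def zigzag (m i : ℕ) : ℕ :=
  if Even i then i / 2 + 1 else m - i / 2

theorem zigzag_mem_Icc {m i : ℕ} (hi : i < m) : zigzag m i ∈ Set.Icc 1 m := by
  grind [zigzag]

theorem bijOn_zigzag (m : ℕ) : Set.BijOn (zigzag m) (Set.Iio m) (Set.Icc 1 m) := by
  refine ⟨fun i => zigzag_mem_Icc, ?_, ?_⟩
  · intro i hi j hj h
    grind [zigzag]
  · intro l hl
    by_cases hlow : 2 * l ≤ m + 1
    · exact ⟨2 * (l - 1), by grind, by grind [zigzag]⟩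
    · exact ⟨2 * (m - l) + 1, by grind, by grind [zigzag]⟩

theorem zigzag_add_zigzag_succ {m i : ℕ} (hi : i + 1 < m) :
    zigzag m i + zigzag m (i + 1) ∈ Set.Icc (m + 1) (m + 2) := by
  grind [zigzag]

section Labeling

variable {V : Type*} [Fintype V] (G : SimpleGraph V) [DecidableRel G.Adj]

theorem exists_bijOn_vertexSum_balanced (hodd : ∀ v, Odd (G.degree v)) :
    ∃ f : Sym2 V → ℕ, Set.BijOn f G.edgeSet (Set.Icc 1 G.edgeFinset.card) ∧
      ∀ v, (G.edgeFinset.card + 1) * G.degree v ≤ 2 * vertexSum G f v + G.edgeFinset.card ∧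
        2 * vertexSum G f v ≤ (G.edgeFinset.card + 2) * G.degree v + G.edgeFinset.card := by
  classical
  obtain ⟨L, hL, hends⟩ := WalkFamily.exists_count_ends_eq_one hodd
  set m := G.edgeFinset.card
  have hnodup : L.edges.Nodup := hL.nodup_iff.2 (Finset.nodup_toList _)
  have hlength : L.edges.length = m := by rw [hL.length_eq, Finset.length_toList]
  have hedges : {e | e ∈ L.edges} = G.edgeSet := by ext e; simp [hL.mem_iff]
  let f : Sym2 V → ℕ := zigzag m ∘ L.edges.idxOf
  have hf : Set.BijOn f G.edgeSet (Set.Icc 1 m) :=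
    (bijOn_zigzag m).comp (hlength ▸ hedges ▸ bijOn_idxOf hnodup)
  have hsum (h : ℕ → ℤ) (hh : ∀ l ∈ Set.Icc 1 m, 0 ≤ h l + m)
      (hpair : ∀ i, i + 1 < m → 0 ≤ h (zigzag m i) + h (zigzag m (i + 1))) (v : V) :
      0 ≤ m + ∑ e ∈ G.incidenceFinset v, h (f e) := by
    have hchain : (L.edges.map (h ∘ f)).IsChain fun a b => 0 ≤ a + b := by
      rw [← Function.comp_assoc, ← List.map_map, map_idxOf_self hnodup, hlength,
        List.isChain_map, List.isChain_range]
      exact fun i hi => hpair i (by lia)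
    have := L.count_ends_smul_add_sum_incidenceFinset_nonneg hL (h ∘ f) (Int.natCast_nonneg m)
      (fun e he => hh _ (hf.mapsTo (hedges ▸ he))) hchain v
    rwa [hends, one_smul] at this
  refine ⟨f, hf, fun v => ?_⟩
  have hlower := hsum (fun l => 2 * l - (m + 1)) (by grind)
    (fun i hi => by have := zigzag_add_zigzag_succ hi; grind) v
  have hupper := hsum (fun l => m + 2 - 2 * l) (by grind)
    (fun i hi => by have := zigzag_add_zigzag_succ hi; grind) v
  rw [Finset.sum_sub_distrib, ← Finset.mul_sum, Finset.sum_const,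
    card_incidenceFinset_eq_degree, nsmul_eq_mul] at hlower hupper
  rw [vertexSum_eq_sum_incidenceFinset]
  zify
  constructor <;> linarith

theorem exists_bijOn_edgeSet_Iio :
    ∃ f : Sym2 V → ℕ, Set.BijOn f G.edgeSet (Set.Iio G.edgeFinset.card) := by
  classical
  refine ⟨G.edgeFinset.toList.idxOf, ?_⟩
  have h := bijOn_idxOf G.edgeFinset.nodup_toList
  simpa only [Finset.mem_toList, mem_edgeFinset, Set.ofPred_mem_eq, Finset.length_toList] using h

end Labeling

theorem exists_bijOn_Iio_monovary {V α : Type*} [Fintype V] [LinearOrder α] (φ : V → α) :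
    ∃ r : V → ℕ, Set.BijOn r Set.univ (Set.Iio (Fintype.card V)) ∧ Monovary φ r := by
  let e := Fintype.equivFin V
  let σ := Tuple.sort (φ ∘ e.symm)
  have hval : Set.BijOn (Fin.val : Fin (Fintype.card V) → ℕ) Set.univ (Set.Iio _) :=
    ⟨fun i _ => i.2, Fin.val_injective.injOn, fun i hi => ⟨⟨i, hi⟩, trivial, rfl⟩⟩
  refine ⟨fun x => σ.symm (e x), hval.comp (Set.bijOn_univ.2 (e.trans σ.symm).bijective),
    fun x y hxy => ?_⟩
  simpa [σ] using Tuple.monotone_sort (φ ∘ e.symm) (Fin.le_of_lt hxy)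

theorem bijOn_add_mul {α β : Type*} {f : α → ℕ} {g : β → ℕ} {s : Set α} {t : Set β} {a b c : ℕ}
    (hf : Set.BijOn f s (Set.Ico c (c + a))) (hg : Set.BijOn g t (Set.Iio b)) :
    Set.BijOn (fun p : α × β => f p.1 + a * g p.2) (s ×ˢ t) (Set.Ico c (c + a * b)) := by
  refine ⟨?_, ?_, ?_⟩
  · rintro ⟨x, y⟩ ⟨hx, hy⟩
    have hfx := hf.mapsTo hx
    have hgy : a * (g y + 1) ≤ a * b := Nat.mul_le_mul_left a (hg.mapsTo hy)
    grind
  · rintro ⟨x, y⟩ ⟨hx, hy⟩ ⟨x', y'⟩ ⟨hx', hy'⟩ h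
    obtain ⟨hcx, hxa⟩ := hf.mapsTo hx
    obtain ⟨hcx', hxa'⟩ := hf.mapsTo hx'
    obtain ⟨i, hi⟩ := Nat.exists_eq_add_of_le hcx
    obtain ⟨j, hj⟩ := Nat.exists_eq_add_of_le hcx'
    have hia : i < a := by lia
    have hja : j < a := by lia
    have hdigits : i + a * g y = j + a * g y' := by
      simp only [hi, hj] at h
      lia
    have hij : i = j := by
      have := congrArg (· % a) hdigits
      simpa [Nat.mod_eq_of_lt, hia, hja] using this
    have hgy : g y = g y' := by
      rw [hij] at hdigits
      exact Nat.eq_of_mul_eq_mul_left (by lia) (Nat.add_left_cancel hdigits)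
    exact Prod.ext (hf.injOn hx hx' (by lia)) (hg.injOn hy hy' hgy)
  · rintro l ⟨hcl, hl⟩
    have ha : 0 < a := by grind
    obtain ⟨x, hx, hfx⟩ := hf.surjOn (a := c + (l - c) % a) (by grind [Nat.mod_lt])
    obtain ⟨y, hy, hgy⟩ := hg.surjOn (a := (l - c) / a) (Nat.div_lt_of_lt_mul (by lia))
    refine ⟨(x, y), ⟨hx, hy⟩, ?_⟩
    have := Nat.mod_add_div (l - c) a
    grind

theorem bijOn_image_of_comp {α β γ : Type*} {f : β → γ} {g : α → β} {s : Set α} {t : Set γ}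
    (h : Set.BijOn (f ∘ g) s t) : Set.BijOn f (g '' s) t :=
  h.image_eq ▸ Set.image_comp f g s ▸ h.injOn.image_of_comp.bijOn_image

theorem bijOn_union_of_disjoint {α β : Type*} {f : α → β} {s s' : Set α} {t t' : Set β}
    (h : Set.BijOn f s t) (h' : Set.BijOn f s' t') (htt' : Disjoint t t') :
    Set.BijOn f (s ∪ s') (t ∪ t') := by
  refine h.union h' ((Set.injOn_union ?_).2 ⟨h.injOn, h'.injOn, ?_⟩)
  · exact Set.disjoint_left.2 fun a ha ha' =>
      Set.disjoint_left.1 htt' (h.mapsTo ha) (h'.mapsTo ha')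
  · exact fun a ha b hb => htt'.ne_of_mem (h.mapsTo ha) (h'.mapsTo hb)

section BoxProd

variable {V₁ V₂ : Type*} {G₁ : SimpleGraph V₁} {G₂ : SimpleGraph V₂}

/-- The edge labeling of a box product which labels the copy of an edge `e₁` of the first factor in
the layer of `v` by `α v e₁`, and the copy of an edge `e₂` of the second factor in the layer of `x`
by `β x e₂`. The vertex of a layer is read off as a representative of a constant pair. -/
noncomputable def layerLabel (α : V₂ → Sym2 V₁ → ℕ) (β : V₁ → Sym2 V₂ → ℕ)
    (e : Sym2 (V₁ × V₂)) : ℕ :=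
  open Classical in
  if (e.map Prod.snd).IsDiag then α (e.map Prod.snd).out.1 (e.map Prod.fst)
  else β (e.map Prod.fst).out.1 (e.map Prod.snd)

theorem layerLabel_left (α : V₂ → Sym2 V₁ → ℕ) (β : V₁ → Sym2 V₂ → ℕ) (v : V₂) (e : Sym2 V₁) :
    layerLabel α β (e.map (·, v)) = α v e := by
  induction e with | _ x y =>
  have hv : s(v, v).out.1 = v := by simpa using Sym2.out_fst_mem s(v, v)
  simp [layerLabel, hv]

theorem layerLabel_right (α : V₂ → Sym2 V₁ → ℕ) (β : V₁ → Sym2 V₂ → ℕ) (x : V₁) {e : Sym2 V₂}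
    (he : ¬ e.IsDiag) : layerLabel α β (e.map (x, ·)) = β x e := by
  induction e with | _ v w =>
  have hx : s(x, x).out.1 = x := by simpa using Sym2.out_fst_mem s(x, x)
  rw [Sym2.mk_isDiag_iff] at he
  simp [layerLabel, hx, he]

variable (G₁ G₂) in
theorem edgeSet_boxProd : (G₁ □ G₂).edgeSet =
    (fun p : Sym2 V₁ × V₂ => p.1.map (·, p.2)) '' (G₁.edgeSet ×ˢ Set.univ) ∪
      (fun p : V₁ × Sym2 V₂ => p.2.map (p.1, ·)) '' (Set.univ ×ˢ G₂.edgeSet) := by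
  refine Set.Subset.antisymm ?_ (Set.union_subset ?_ ?_)
  · intro e
    induction e with | _ a b =>
    obtain ⟨x, v⟩ := a
    obtain ⟨y, w⟩ := b
    rw [mem_edgeSet, boxProd_adj]
    rintro (⟨h, rfl⟩ | ⟨h, rfl⟩)
    · exact Or.inl ⟨(s(x, y), v), ⟨h, trivial⟩, rfl⟩
    · exact Or.inr ⟨(x, s(v, w)), ⟨trivial, h⟩, rfl⟩
  · rintro _ ⟨⟨e, v⟩, ⟨he, -⟩, rfl⟩
    induction e with | _ x y => exact boxProd_adj_left.2 he
  · rintro _ ⟨⟨x, e⟩, ⟨-, he⟩, rfl⟩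
    induction e with | _ v w => exact boxProd_adj_right.2 he

theorem bijOn_layerLabel {α : V₂ → Sym2 V₁ → ℕ} {β : V₁ → Sym2 V₂ → ℕ} {s t : Set ℕ}
    (hα : Set.BijOn (fun p : Sym2 V₁ × V₂ => α p.2 p.1) (G₁.edgeSet ×ˢ Set.univ) s)
    (hβ : Set.BijOn (fun p : V₁ × Sym2 V₂ => β p.1 p.2) (Set.univ ×ˢ G₂.edgeSet) t)
    (hst : Disjoint s t) :
    Set.BijOn (layerLabel α β) (G₁ □ G₂).edgeSet (s ∪ t) := by
  have hleft : Set.BijOn (layerLabel α β ∘ fun p : Sym2 V₁ × V₂ => p.1.map (·, p.2))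
      (G₁.edgeSet ×ˢ Set.univ) s :=
    hα.congr fun p _ => (layerLabel_left α β p.2 p.1).symm
  have hright : Set.BijOn (layerLabel α β ∘ fun p : V₁ × Sym2 V₂ => p.2.map (p.1, ·))
      (Set.univ ×ˢ G₂.edgeSet) t :=
    hβ.congr fun p hp => (layerLabel_right α β p.1 (G₂.not_isDiag_of_mem_edgeSet hp.2)).symm
  rw [edgeSet_boxProd]
  exact bijOn_union_of_disjoint (bijOn_image_of_comp hleft) (bijOn_image_of_comp hright) hst

theorem bijOn_layerLabel_blocks {σ : Sym2 V₁ → ℕ} {τ : Sym2 V₂ → ℕ} {r : V₁ → ℕ} {q : V₂ → ℕ}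
    {m₁ m₂ n₁ n₂ : ℕ}
    (hσ : Set.BijOn σ G₁.edgeSet (Set.Icc 1 m₁)) (hq : Set.BijOn q Set.univ (Set.Iio n₂))
    (hr : Set.BijOn r Set.univ (Set.Iio n₁)) (hτ : Set.BijOn τ G₂.edgeSet (Set.Iio m₂)) :
    Set.BijOn (layerLabel (fun v e => σ e + m₁ * q v) fun x e => 1 + m₁ * n₂ + n₁ * τ e + r x)
      (G₁ □ G₂).edgeSet (Set.Icc 1 (m₁ * n₂ + n₁ * m₂)) := by
  rw [← Set.Ico_add_one_right_eq_Icc, add_comm m₁] at hσ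
  have hr' : Set.BijOn (fun x => 1 + m₁ * n₂ + r x) Set.univ
      (Set.Ico (1 + m₁ * n₂) (1 + m₁ * n₂ + n₁)) := by
    have hshift : Set.BijOn (1 + m₁ * n₂ + ·) (Set.Iio n₁)
        (Set.Ico (1 + m₁ * n₂) (1 + m₁ * n₂ + n₁)) :=
      ⟨fun i hi => by grind, (add_right_injective _).injOn,
        fun l hl => ⟨l - (1 + m₁ * n₂), by grind, by grind⟩⟩
    exact hshift.comp hr
  have hright : Set.BijOn (fun p : V₁ × Sym2 V₂ => 1 + m₁ * n₂ + n₁ * τ p.2 + r p.1)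
      (Set.univ ×ˢ G₂.edgeSet) (Set.Ico (1 + m₁ * n₂) (1 + m₁ * n₂ + n₁ * m₂)) :=
    (bijOn_add_mul hr' hτ).congr fun p _ => add_right_comm ..
  have hunion := bijOn_layerLabel (α := fun v e => σ e + m₁ * q v)
    (β := fun x e => 1 + m₁ * n₂ + n₁ * τ e + r x) (bijOn_add_mul hσ hq) hright
    Set.Ico_disjoint_Ico_same
  rwa [Set.Ico_union_Ico_eq_Ico (by lia) (by lia), add_assoc,
    add_comm 1 (m₁ * n₂ + _), Set.Ico_add_one_right_eq_Icc] at hunion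

theorem vertexSum_layerLabel [Finite V₁] [Finite V₂] (α : V₂ → Sym2 V₁ → ℕ)
    (β : V₁ → Sym2 V₂ → ℕ) (x : V₁) (v : V₂) :
    vertexSum (G₁ □ G₂) (layerLabel α β) (x, v) =
      vertexSum G₁ (α v) x + vertexSum G₂ (β x) v := by
  classical
  have := Fintype.ofFinite V₁
  have := Fintype.ofFinite V₂
  simp only [vertexSum_eq_sum_neighborFinset, neighborFinset_boxProd, Finset.sum_disjUnion,
    Finset.sum_product, Finset.sum_singleton]
  congr 1
  · exact Finset.sum_congr rfl fun y _ => layerLabel_left α β v s(x, y)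
  · exact Finset.sum_congr rfl fun w hw => layerLabel_right α β x
      (Sym2.mk_isDiag_iff.not.2 ((G₂.mem_neighborFinset v w).1 hw).ne)

end BoxProd

theorem injective_of_lex_lt {α β γ ι κ : Type*} [Preorder γ] [LinearOrder ι] [LinearOrder κ]
    {f : α × β → γ} {r : α → ι} {q : β → κ} (hr : r.Injective) (hq : q.Injective)
    (hfst : ∀ x y v, r x < r y → f (x, v) < f (y, v))
    (hsnd : ∀ x y v w, q v < q w → f (x, v) < f (y, w)) : f.Injective := by
  rintro ⟨x, v⟩ ⟨y, w⟩ h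
  obtain rfl : v = w := by
    rcases lt_trichotomy (q v) (q w) with hlt | heq | hgt
    · exact absurd h (hsnd x y v w hlt).ne
    · exact hq heq
    · exact absurd h (hsnd y x w v hgt).ne'
  rcases lt_trichotomy (r x) (r y) with hlt | heq | hgt
  · exact absurd h (hfst x y v hlt).ne
  · rw [hr heq]
  · exact absurd h (hfst y x v hgt).ne'

section Antimagic

variable {V₁ V₂ : Type*} [Fintype V₁] [Fintype V₂] {G₁ : SimpleGraph V₁}
  {G₂ : SimpleGraph V₂} [DecidableRel G₁.Adj] [DecidableRel G₂.Adj]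

theorem isAntimagic_boxProd_of_vertexSum_lt {σ : Sym2 V₁ → ℕ} {k m₁ : ℕ}
    (hσ : Set.BijOn σ G₁.edgeSet (Set.Icc 1 m₁)) (hreg : G₁.IsRegularOfDegree k)
    (hmin : ∀ v, 1 ≤ G₂.degree v)
    (hspread : ∀ x y v, vertexSum G₁ σ x + G₂.degree v * (Fintype.card V₁ - 1) <
      vertexSum G₁ σ y + k * m₁) :
    IsAntimagic (G₁ □ G₂) := by
  obtain ⟨τ, hτ⟩ := exists_bijOn_edgeSet_Iio G₂
  obtain ⟨r, hr, hrσ⟩ := exists_bijOn_Iio_monovary (vertexSum G₁ σ)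
  let φ : V₂ → ℕ := vertexSum G₂ fun e =>
    1 + m₁ * Fintype.card V₂ + Fintype.card V₁ * τ e
  obtain ⟨q, hq, hqφ⟩ := exists_bijOn_Iio_monovary φ
  have hsum (x : V₁) (v : V₂) :
      vertexSum (G₁ □ G₂) (layerLabel (fun v e => σ e + m₁ * q v) fun x e =>
        1 + m₁ * Fintype.card V₂ + Fintype.card V₁ * τ e + r x) (x, v) =
      vertexSum G₁ σ x + k * (m₁ * q v) + (φ v + G₂.degree v * r x) := by
    rw [vertexSum_layerLabel, vertexSum_add_const, vertexSum_add_const, hreg.degree_eq]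
  refine isAntimagic_of_bijOn (bijOn_layerLabel_blocks hσ hq hr hτ) <|
    injective_of_lex_lt (Set.injOn_univ.1 hr.injOn) (Set.injOn_univ.1 hq.injOn)
      (fun x y v hxy => ?_) (fun x y v w hvw => ?_)
  · rw [hsum, hsum]
    have hσxy := hrσ hxy
    have hdeg := Nat.mul_lt_mul_of_pos_left hxy (hmin v)
    lia
  · rw [hsum, hsum]
    have hφvw := hqφ hvw
    have hrx : r x < Fintype.card V₁ := hr.mapsTo trivial
    have hdeg : G₂.degree v * r x ≤ G₂.degree v * (Fintype.card V₁ - 1) :=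
      Nat.mul_le_mul_left _ (by lia)
    have hgap : k * (m₁ * q v) + k * m₁ ≤ k * (m₁ * q w) := by
      rw [← Nat.mul_add, ← Nat.mul_succ]
      gcongr
      exact hvw
    have hxy := hspread x y v
    lia

end Antimagic

theorem two_mul_add_add_lt_two_mul_mul {k k₂ m n : ℕ} (hodd : Odd k) (hk₂ : 1 ≤ k₂)
    (hineq : k₂ ≤ (k ^ 2 - k) / 2) (hn : 1 ≤ n) (hm : n * k = 2 * m) :
    2 * m + k + 2 * (k₂ * (n - 1)) < 2 * (k * m) := by
  obtain ⟨N, rfl⟩ := Nat.exists_eq_add_of_le' hn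
  have hk : 2 * k₂ + k ≤ k ^ 2 := by
    have : k ≤ k ^ 2 := Nat.le_self_pow two_ne_zero k
    lia
  obtain ⟨j, rfl⟩ := hodd
  have hj : 1 ≤ j := by
    rcases j with _ | j <;> lia
  have := Nat.mul_le_mul_right N hk
  simp only [Nat.add_sub_cancel]
  nlinarith

/-- If `G₁` is a `k₁`-regular graph with `k₁` odd (not necessarily connected), `G₂` has
maximum degree at most `k₂` and minimum degree at least `1`, and `(k₁² − k₁)/2 ≥ k₂`,
then the Cartesian product `G₁ □ G₂` is antimagic. -/
theorem boxProd_antimagic_odd {V₁ V₂ : Type} [Finite V₁] [Finite V₂]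
    {n₁ k₁ k₂ : ℕ} (G₁ : SimpleGraph V₁) (G₂ : SimpleGraph V₂)
    (hn₁ : Nat.card V₁ = n₁)
    (hreg : ∀ v : V₁, Nat.card (G₁.neighborSet v) = k₁)
    (hodd : Odd k₁)
    (hmax : ∀ v : V₂, Nat.card (G₂.neighborSet v) ≤ k₂)
    (hmin : ∀ v : V₂, 1 ≤ Nat.card (G₂.neighborSet v))
    (hineq : k₂ ≤ (k₁ ^ 2 - k₁) / 2) :
    IsAntimagic (G₁ □ G₂) := by
  classical
  have := Fintype.ofFinite V₁
  have := Fintype.ofFinite V₂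
  simp only [Nat.card_eq_fintype_card, card_neighborSet_eq_degree] at hreg hmax hmin
  obtain ⟨σ, hσ, hbal⟩ := exists_bijOn_vertexSum_balanced G₁ fun x => hreg x ▸ hodd
  have hm : Fintype.card V₁ * k₁ = 2 * G₁.edgeFinset.card := by
    simpa [hreg] using G₁.sum_degrees_eq_twice_card_edges
  refine isAntimagic_boxProd_of_vertexSum_lt hσ hreg hmin fun x y v => ?_
  have hx := (hbal x).2
  have hy := (hbal y).1
  rw [hreg] at hx hy
  have hdeg := Nat.mul_le_mul_right (Fintype.card V₁ - 1) (hmax v)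
  have := two_mul_add_add_lt_two_mul_mul hodd ((hmin v).trans (hmax v)) hineq
    (Fintype.card_pos_iff.2 ⟨x⟩) hm
  linarith
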